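/- Let δe, δb, δr, f be relations on a type α and (ms₁, ms₂) the least pair of subsets of α closed under rules (R1)–(R6). Let δ''p be a relation on α with δ''p ∩ δe = ∅ and f ∩ δe = ∅. Let s₀,…,s_n be a p''[]₂δe[]f prefix with s_n ∈ ms₂, and suppose either n = 0 or (s_{n−1}, s_n) ∉ δe. Then s_n ∈ ms₁, or there exists u with (s_n, u) ∈ δe such that s₀,…,s_n,u is a p''[]₂δe[]f prefix and either (s_n, u) ∈ δb or u ∈ ms₁. -/

import Mathlib

variable {α : Type*}

/-- The closure rules (R1)–(R6) computed by the failsafe fault-tolerance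
addition algorithm, for a pair of sets `(ms₁, ms₂)`. -/
def ClosedMS (δe δb δr f : Set (α × α)) (ms₁ ms₂ : Set α) : Prop :=
  -- (R1)
  (∀ s t, (s, t) ∈ f → (s, t) ∈ δb → s ∈ ms₁) ∧
  -- (R2)
  (ms₁ ⊆ ms₂) ∧
  -- (R3)
  (∀ s t, (s, t) ∈ δe → (s, t) ∈ δb → s ∈ ms₂) ∧
  -- (R4)
  (∀ s t, (s, t) ∈ f → t ∈ ms₂ → s ∈ ms₁) ∧
  -- (R5)
  (∀ s, (∃ t, ((s, t) ∈ δe ∧ t ∈ ms₁) ∨ ((s, t) ∈ δe ∧ (s, t) ∈ δb)) →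
    (∀ u, (s, u) ∈ δb ∨ (s, u) ∈ δr ∨ u ∈ ms₂) → s ∈ ms₁) ∧
  -- (R6)
  (∀ s t, (s, t) ∈ δe → t ∈ ms₁ → s ∈ ms₂)

/-- `(ms₁, ms₂)` is the least pair of sets closed under rules (R1)–(R6). -/
def LeastMS (δe δb δr f : Set (α × α)) (ms₁ ms₂ : Set α) : Prop :=
  ClosedMS δe δb δr f ms₁ ms₂ ∧
  ∀ ms₁' ms₂', ClosedMS δe δb δr f ms₁' ms₂' → ms₁ ⊆ ms₁' ∧ ms₂ ⊆ ms₂'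

/-- `PrefixF δp δe f σ n`: the finite sequence `σ 0, …, σ n` is a `p[]₂δe[]f` prefix. -/
def PrefixF (δp δe f : Set (α × α)) (σ : ℕ → α) (n : ℕ) : Prop :=
  (∀ i < n, (σ i, σ (i + 1)) ∈ δp ∪ δe ∪ f) ∧
  (∀ i, i + 2 ≤ n → (σ i, σ (i + 1)) ∈ δe → (∃ t, (σ (i + 1), t) ∈ δp) →
    (σ (i + 1), σ (i + 2)) ∈ δp ∪ f)

theorem stmt12 (δe δb δr f δ''p : Set (α × α)) (ms₁ ms₂ : Set α)
    (hms : LeastMS δe δb δr f ms₁ ms₂)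
    (hpe : δ''p ∩ δe = ∅) (hfe : f ∩ δe = ∅)
    (σ : ℕ → α) (n : ℕ) (hpre : PrefixF δ''p δe f σ n)
    (hn : σ n ∈ ms₂)
    (hlast : n = 0 ∨ (σ (n - 1), σ n) ∉ δe) :
    σ n ∈ ms₁ ∨
    ∃ u, (σ n, u) ∈ δe ∧
      (∃ σ' : ℕ → α, (∀ i ≤ n, σ' i = σ i) ∧ σ' (n + 1) = u ∧
        PrefixF δ''p δe f σ' (n + 1)) ∧
      ((σ n, u) ∈ δb ∨ u ∈ ms₁) := by
  obtain ⟨⟨r1, r2, r3, r4, r5, r6⟩, hmin⟩ := hms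
  have key := (hmin ms₁ {s | s ∈ ms₂ ∧ (s ∈ ms₁ ∨ ∃ u, (s, u) ∈ δe ∧ ((s, u) ∈ δb ∨ u ∈ ms₁))}
    ⟨r1, fun s hs => ⟨r2 hs, Or.inl hs⟩,
      fun s t h1 h2 => ⟨r3 s t h1 h2, Or.inr ⟨t, h1, Or.inl h2⟩⟩,
      fun s t h1 h2 => r4 s t h1 h2.1,
      fun s h1 h2 => r5 s h1 fun u => (h2 u).imp_right (fun h => h.imp_right (fun h => h.1)),
      fun s t h1 h2 => ⟨r6 s t h1 h2, Or.inr ⟨t, h1, Or.inr h2⟩⟩⟩).2 hn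
  rcases key.2 with h | ⟨u, hu, hb⟩
  · exact Or.inl h
  refine Or.inr ⟨u, hu, ⟨fun i => if i ≤ n then σ i else u, ?_, ?_, ?_, ?_⟩, hb⟩
  · intro i hi
    simp [hi]
  · simp
  · intro i hi
    rcases Nat.lt_or_ge i n with h | h
    · have h1 : i ≤ n := h.le
      have h2 : i + 1 ≤ n := h
      simpa only [h1, h2, if_true] using hpre.1 i h
    · obtain rfl : i = n := by omega
      simp [hu]
  · intro i hi
    have h1 : i ≤ n := by omega
    have h2 : i + 1 ≤ n := by omega
    rcases Nat.lt_or_ge (i + 1) n with h | h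
    · have h3 : i + 2 ≤ n := h
      simpa only [h1, h2, h3, if_true] using hpre.2 i h3
    · obtain rfl : n = i + 1 := by omega
      simp only [h1, h2, if_true]
      intro he
      rcases hlast with h0 | h0
      · omega
      · exact absurd he h0
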